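/- Let θ₁, θ₂ ∈ ℝ satisfy sin θ₁ ≠ 0, sin θ₂ ≠ 0, and cos θ₁ ≠ cos θ₂ (so that the eigenvalues e^{±iθ₁}, e^{±iθ₂} are pairwise distinct). Then the centralizer of r(θ₁,θ₂) in Sp(4,ℝ) is exactly {r(φ₁,φ₂) : φ₁, φ₂ ∈ ℝ}, i.e., the full compact torus; in particular it is isomorphic to S¹ × S¹. -/

import Mathlib

open Matrix Real

noncomputable section

/-- Build a 4×4 real matrix from four 2×2 blocks. -/
def bm (A B C D : Matrix (Fin 2) (Fin 2) ℝ) : Matrix (Fin 4) (Fin 4) ℝ :=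
  Matrix.reindex finSumFinEquiv finSumFinEquiv (Matrix.fromBlocks A B C D)

/-- The standard symplectic form matrix J = [[0, I₂], [−I₂, 0]]. -/
def J4 : Matrix (Fin 4) (Fin 4) ℝ := bm 0 1 (-1) 0

/-- Membership in Sp(4,ℝ): ᵗg·J·g = J. -/
def IsSymp (g : Matrix (Fin 4) (Fin 4) ℝ) : Prop := gᵀ * J4 * g = J4

/-- The compact torus element r(θ₁,θ₂) = [[C, S], [−S, C]] with
C = diag(cos θ₁, cos θ₂), S = diag(sin θ₁, sin θ₂). -/
def rot (θ₁ θ₂ : ℝ) : Matrix (Fin 4) (Fin 4) ℝ :=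
  bm (Matrix.diagonal ![Real.cos θ₁, Real.cos θ₂]) (Matrix.diagonal ![Real.sin θ₁, Real.sin θ₂])
    (-(Matrix.diagonal ![Real.sin θ₁, Real.sin θ₂])) (Matrix.diagonal ![Real.cos θ₁, Real.cos θ₂])

/-!
The rotation `γ = [[C, S], [-S, C]]` is orthogonal, so whatever commutes with `γ` also commutes with
`γ⁻¹ = γᵀ`, hence with `γ + γᵀ = diag(2C, 2C)`. As the entries of `C` are distinct, each block of
such a matrix is diagonal, and commuting with `γ` once more, where `S` is invertible, forces the
shape `[[A, B], [-B, A]]`. With `A` and `B` diagonal, such a matrix is symplectic exactly when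
`A² + B² = 1`, i.e. when each pair of diagonal entries is a point of the unit circle.
-/

theorem commute_transpose_of_mul_transpose_eq_one {n R : Type*} [Fintype n] [DecidableEq n]
    [CommRing R] {A M : Matrix n n R} (hA : A * Aᵀ = 1) (hM : Commute M A) : Commute M Aᵀ :=
  letI := invertibleOfRightInverse A Aᵀ hA
  hM.invOf_right

section Diagonal

variable {n R : Type*} [Fintype n] [DecidableEq n] [CommRing R] [NoZeroDivisors R]

theorem isDiag_of_commute_diagonal {d : n → R} (hd : Function.Injective d) {A : Matrix n n R}
    (hA : Commute A (diagonal d)) : A.IsDiag := by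
  intro i j hij
  have entry : A i j * d j = d i * A i j := by
    simpa only [mul_diagonal, diagonal_mul] using congr_fun₂ hA.eq i j
  have hzero : A i j * (d j - d i) = 0 := by linear_combination entry
  exact (mul_eq_zero.mp hzero).resolve_right (sub_ne_zero.mpr (hd.ne hij.symm))

theorem exists_fromBlocks_diagonal_of_commute {d : n → R} (hd : Function.Injective d)
    {M : Matrix (n ⊕ n) (n ⊕ n) R}
    (hM : Commute M (fromBlocks (diagonal d) 0 0 (diagonal d))) :
    ∃ p q r s : n → R,
      M = fromBlocks (diagonal p) (diagonal q) (diagonal r) (diagonal s) := by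
  have hblocks := hM.eq
  rw [← fromBlocks_toBlocks M, fromBlocks_multiply, fromBlocks_multiply] at hblocks
  simp only [Matrix.mul_zero, Matrix.zero_mul, add_zero, zero_add, fromBlocks_inj] at hblocks
  obtain ⟨h₁₁, h₁₂, h₂₁, h₂₂⟩ := hblocks
  refine ⟨M.toBlocks₁₁.diag, M.toBlocks₁₂.diag, M.toBlocks₂₁.diag, M.toBlocks₂₂.diag, ?_⟩
  rw [(isDiag_of_commute_diagonal hd h₁₁).diagonal_diag,
    (isDiag_of_commute_diagonal hd h₁₂).diagonal_diag,
    (isDiag_of_commute_diagonal hd h₂₁).diagonal_diag,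
    (isDiag_of_commute_diagonal hd h₂₂).diagonal_diag, fromBlocks_toBlocks]

end Diagonal

section DiagRotation

variable {n R : Type*} [DecidableEq n] [CommRing R] {a b c d : n → R}

/-- The block matrix `[[diag a, diag b], [-diag b, diag a]]`, which represents the tuple of
"complex numbers" `a i + b i * I` over `R`; the paper's `r(θ)` has `a = cos θ` and `b = sin θ`. -/
def diagRotation (a b : n → R) : Matrix (n ⊕ n) (n ⊕ n) R :=
  fromBlocks (diagonal a) (diagonal b) (-diagonal b) (diagonal a)

theorem diagRotation_inj : diagRotation a b = diagRotation c d ↔ a = c ∧ b = d := by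
  simp only [diagRotation, fromBlocks_inj, neg_inj, diagonal_injective.eq_iff]
  tauto

theorem diagRotation_one_zero : diagRotation (1 : n → R) 0 = 1 := by
  simp [diagRotation]

theorem diagRotation_zero_neg_one : diagRotation (0 : n → R) (-1) = J n R := by
  simp [diagRotation, J, diagonal_neg, ← diagonal_one]

theorem diagRotation_transpose (a b : n → R) : (diagRotation a b)ᵀ = diagRotation a (-b) := by
  simp [diagRotation, fromBlocks_transpose, diagonal_neg]

theorem diagRotation_add_transpose (a b : n → R) :
    diagRotation a b + (diagRotation a b)ᵀ =
      fromBlocks (diagonal (2 * a)) 0 0 (diagonal (2 * a)) := by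
  simp [diagRotation, fromBlocks_transpose, fromBlocks_add, two_mul]

variable [Fintype n]

theorem diagRotation_mul (a b c d : n → R) :
    diagRotation a b * diagRotation c d = diagRotation (a * c - b * d) (a * d + b * c) := by
  simp only [diagRotation, fromBlocks_multiply, fromBlocks_inj, diagonal_neg,
    diagonal_mul_diagonal', diagonal_add, diagonal_injective.eq_iff, funext_iff]
  refine ⟨fun i => ?_, fun i => ?_, fun i => ?_, fun i => ?_⟩ <;>
    simp only [Pi.add_apply, Pi.sub_apply, Pi.mul_apply] <;> ring

theorem diagRotation_commute (a b c d : n → R) :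
    Commute (diagRotation a b) (diagRotation c d) := by
  rw [commute_iff_eq, diagRotation_mul, diagRotation_mul, diagRotation_inj]
  constructor <;> ring

theorem diagRotation_mul_transpose (hab : a ^ 2 + b ^ 2 = 1) :
    diagRotation a b * (diagRotation a b)ᵀ = 1 := by
  rw [diagRotation_transpose, diagRotation_mul, ← diagRotation_one_zero, diagRotation_inj]
  exact ⟨by linear_combination hab, by ring⟩

theorem diagRotation_mem_symplecticGroup_iff :
    diagRotation a b ∈ symplecticGroup n R ↔ a ^ 2 + b ^ 2 = 1 := by
  rw [SymplecticGroup.mem_iff, ← diagRotation_zero_neg_one, diagRotation_transpose,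
    diagRotation_mul, diagRotation_mul, diagRotation_inj]
  constructor
  · rintro ⟨-, h⟩
    linear_combination -h
  · intro h
    exact ⟨by ring, by linear_combination -h⟩

variable [NoZeroDivisors R]

theorem eq_and_eq_neg_of_commute_diagRotation {p q r s : n → R} (hb : ∀ i, b i ≠ 0)
    (h : Commute (fromBlocks (diagonal p) (diagonal q) (diagonal r) (diagonal s))
      (diagRotation a b)) :
    s = p ∧ r = -q := by
  have hblocks := h.eq
  simp only [diagRotation, fromBlocks_multiply, fromBlocks_inj, diagonal_neg,
    diagonal_mul_diagonal', diagonal_add, diagonal_injective.eq_iff, funext_iff] at hblocks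
  obtain ⟨h₁₁, h₁₂, -, -⟩ := hblocks
  constructor <;> ext i <;> apply mul_left_cancel₀ (hb i)
  · linear_combination -h₁₂ i
  · simp only [Pi.neg_apply]
    linear_combination -h₁₁ i

theorem commute_diagRotation_iff [NeZero (2 : R)] (hab : a ^ 2 + b ^ 2 = 1)
    (ha : Function.Injective a) (hb : ∀ i, b i ≠ 0) {M : Matrix (n ⊕ n) (n ⊕ n) R} :
    Commute M (diagRotation a b) ↔ ∃ c d, M = diagRotation c d := by
  constructor
  · intro hM
    have hMT : Commute M (diagRotation a b)ᵀ :=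
      commute_transpose_of_mul_transpose_eq_one (diagRotation_mul_transpose hab) hM
    have hdiag : Commute M (fromBlocks (diagonal (2 * a)) 0 0 (diagonal (2 * a))) :=
      diagRotation_add_transpose a b ▸ hM.add_right hMT
    have h2a : Function.Injective (2 * a) := (mul_right_injective₀ two_ne_zero).comp ha
    obtain ⟨p, q, r, s, rfl⟩ := exists_fromBlocks_diagonal_of_commute h2a hdiag
    obtain ⟨rfl, rfl⟩ := eq_and_eq_neg_of_commute_diagRotation hb hM
    exact ⟨s, q, by simp [diagRotation, diagonal_neg]⟩
  · rintro ⟨c, d, rfl⟩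
    exact diagRotation_commute c d a b

end DiagRotation

section CircleTorus

theorem circle_re_sq_add_im_sq (z : Circle) : (z : ℂ).re ^ 2 + (z : ℂ).im ^ 2 = 1 := by
  simpa only [Complex.normSq_apply, sq] using z.normSq_coe

variable (n : Type*) [Fintype n] [DecidableEq n]

/-- The standard compact maximal torus of `Sp(2n, ℝ)`, as a homomorphism from `(S¹)ⁿ` to
matrices. -/
def circleTorus : (n → Circle) →* Matrix (n ⊕ n) (n ⊕ n) ℝ where
  toFun z := diagRotation (fun i => (z i : ℂ).re) (fun i => (z i : ℂ).im)
  map_one' := by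
    rw [← diagRotation_one_zero]
    rfl
  map_mul' z w := by
    rw [diagRotation_mul]
    rfl

variable {n}

theorem circleTorus_apply (z : n → Circle) :
    circleTorus n z = diagRotation (fun i => (z i : ℂ).re) (fun i => (z i : ℂ).im) :=
  rfl

theorem circleTorus_injective : Function.Injective (circleTorus n) := by
  intro z w h
  obtain ⟨hre, him⟩ := diagRotation_inj.mp h
  exact funext fun i => Circle.ext (Complex.ext (congr_fun hre i) (congr_fun him i))

theorem range_circleTorus :
    Set.range (circleTorus n) = {g | g ∈ symplecticGroup n ℝ ∧ ∃ c d, g = diagRotation c d} := by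
  ext g
  constructor
  · rintro ⟨z, rfl⟩
    exact ⟨diagRotation_mem_symplecticGroup_iff.mpr
      (funext fun i => circle_re_sq_add_im_sq (z i)), _, _, rfl⟩
  · rintro ⟨hg, c, d, rfl⟩
    have hcd := diagRotation_mem_symplecticGroup_iff.mp hg
    have hnorm (i : n) : ‖(⟨c i, d i⟩ : ℂ)‖ = 1 := by
      rw [← pow_eq_one_iff_of_nonneg (norm_nonneg _) two_ne_zero, Complex.sq_norm,
        Complex.normSq_mk, ← sq, ← sq]
      exact congr_fun hcd i
    exact ⟨fun i => ⟨⟨c i, d i⟩, mem_sphere_zero_iff_norm.mpr (hnorm i)⟩, rfl⟩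

theorem centralizer_regular_elliptic_general {z : n → Circle} (him : ∀ i, (z i : ℂ).im ≠ 0)
    (hre : Function.Injective fun i => (z i : ℂ).re) :
    Set.range (circleTorus n) =
      {g | g ∈ symplecticGroup n ℝ ∧ g * circleTorus n z = circleTorus n z * g} := by
  have hz : (fun i => (z i : ℂ).re) ^ 2 + (fun i => (z i : ℂ).im) ^ 2 = 1 :=
    funext fun i => circle_re_sq_add_im_sq (z i)
  simp only [range_circleTorus, circleTorus_apply, ← commute_iff_eq,
    commute_diagRotation_iff hz hre him]

end CircleTorus

section FinFour

/-- The relabelling of rows and columns that underlies `bm`, as a ring isomorphism. -/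
def blockRingEquiv : Matrix (Fin 2 ⊕ Fin 2) (Fin 2 ⊕ Fin 2) ℝ ≃+* Matrix (Fin 4) (Fin 4) ℝ :=
  reindexRingEquiv ℝ finSumFinEquiv

theorem J4_eq_blockRingEquiv : J4 = blockRingEquiv (-J (Fin 2) ℝ) := by
  simp [J4, bm, J, fromBlocks_neg, blockRingEquiv]

theorem isSymp_blockRingEquiv_iff {M : Matrix (Fin 2 ⊕ Fin 2) (Fin 2 ⊕ Fin 2) ℝ} :
    IsSymp (blockRingEquiv M) ↔ M ∈ symplecticGroup (Fin 2) ℝ := by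
  have htranspose : (blockRingEquiv M)ᵀ = blockRingEquiv Mᵀ := rfl
  rw [IsSymp, J4_eq_blockRingEquiv, htranspose, ← map_mul, ← map_mul,
    blockRingEquiv.injective.eq_iff, SymplecticGroup.mem_iff', Matrix.mul_neg,
    Matrix.neg_mul, neg_inj]

/-- The torus `circleTorus` for `Sp(4, ℝ)`, with rows and columns indexed by `Fin 4` and the two
circle factors as a product. -/
def circleProdTorus : Circle × Circle →* Matrix (Fin 4) (Fin 4) ℝ where
  toFun z := blockRingEquiv (circleTorus (Fin 2) ![z.1, z.2])
  map_one' := by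
    have hone : ![1, 1] = (1 : Fin 2 → Circle) := by
      ext i; fin_cases i <;> rfl
    rw [Prod.fst_one, Prod.snd_one, hone, map_one, map_one]
  map_mul' z w := by
    have hmul : ![(z * w).1, (z * w).2] = ![z.1, z.2] * ![w.1, w.2] := by
      ext i; fin_cases i <;> rfl
    rw [hmul, map_mul, map_mul]

theorem circleProdTorus_apply (z : Circle × Circle) :
    circleProdTorus z = blockRingEquiv (circleTorus (Fin 2) ![z.1, z.2]) :=
  rfl

theorem circleProdTorus_injective : Function.Injective circleProdTorus := by
  intro z w h
  have hzw : ![z.1, z.2] = ![w.1, w.2] := circleTorus_injective (blockRingEquiv.injective h)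
  exact Prod.ext (congr_fun hzw 0) (congr_fun hzw 1)

theorem rot_eq_circleProdTorus (θ₁ θ₂ : ℝ) :
    rot θ₁ θ₂ = circleProdTorus (Circle.exp θ₁, Circle.exp θ₂) := by
  have hcos : ![cos θ₁, cos θ₂] = fun i => (![Circle.exp θ₁, Circle.exp θ₂] i : ℂ).re := by
    ext i; fin_cases i <;> simp [Circle.coe_exp, Complex.exp_ofReal_mul_I_re]
  have hsin : ![sin θ₁, sin θ₂] = fun i => (![Circle.exp θ₁, Circle.exp θ₂] i : ℂ).im := by
    ext i; fin_cases i <;> simp [Circle.coe_exp, Complex.exp_ofReal_mul_I_im]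
  rw [rot, hcos, hsin]
  rfl

theorem mem_range_circleProdTorus_iff {g : Matrix (Fin 4) (Fin 4) ℝ} :
    g ∈ Set.range circleProdTorus ↔ ∃ φ₁ φ₂ : ℝ, g = rot φ₁ φ₂ := by
  simp only [Set.mem_range, Prod.exists, Circle.exp_surjective.exists, rot_eq_circleProdTorus,
    eq_comm]

theorem range_circleProdTorus_eq_image :
    Set.range circleProdTorus = blockRingEquiv '' Set.range (circleTorus (Fin 2)) := by
  rw [← Set.range_comp, ← (finTwoArrowEquiv Circle).symm.surjective.range_comp]
  rfl

theorem range_circleProdTorus_eq_centralizer {θ₁ θ₂ : ℝ} (h₁ : sin θ₁ ≠ 0) (h₂ : sin θ₂ ≠ 0)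
    (h₃ : cos θ₁ ≠ cos θ₂) :
    Set.range circleProdTorus = {g | IsSymp g ∧ g * rot θ₁ θ₂ = rot θ₁ θ₂ * g} := by
  have him : ∀ i, (![Circle.exp θ₁, Circle.exp θ₂] i : ℂ).im ≠ 0 := by
    simp [Fin.forall_fin_two, Circle.coe_exp, Complex.exp_ofReal_mul_I_im, h₁, h₂]
  have hre : Function.Injective fun i => (![Circle.exp θ₁, Circle.exp θ₂] i : ℂ).re := by
    simpa [Function.Injective, Fin.forall_fin_two, Circle.coe_exp,
      Complex.exp_ofReal_mul_I_re] using ⟨h₃, h₃.symm⟩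
  ext g
  obtain ⟨M, rfl⟩ := blockRingEquiv.surjective g
  rw [range_circleProdTorus_eq_image, blockRingEquiv.injective.mem_set_image,
    centralizer_regular_elliptic_general him hre, Set.mem_ofPred_eq, Set.mem_ofPred_eq,
    isSymp_blockRingEquiv_iff, rot_eq_circleProdTorus, circleProdTorus_apply, ← map_mul, ← map_mul,
    blockRingEquiv.injective.eq_iff]

end FinFour

/-- For a regular elliptic element r(θ₁,θ₂) (sin θ₁ ≠ 0, sin θ₂ ≠ 0,
cos θ₁ ≠ cos θ₂), the centralizer in Sp(4,ℝ) is exactly the full compact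
torus {r(φ₁,φ₂)}; in particular it is isomorphic to S¹ × S¹. -/
theorem centralizer_regular_elliptic (θ₁ θ₂ : ℝ)
    (h₁ : Real.sin θ₁ ≠ 0) (h₂ : Real.sin θ₂ ≠ 0) (h₃ : Real.cos θ₁ ≠ Real.cos θ₂) :
    (∀ g : Matrix (Fin 4) (Fin 4) ℝ,
      (IsSymp g ∧ g * rot θ₁ θ₂ = rot θ₁ θ₂ * g) ↔ ∃ φ₁ φ₂ : ℝ, g = rot φ₁ φ₂) ∧
    (∃ f : Circle × Circle → Matrix (Fin 4) (Fin 4) ℝ,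
      (∀ z w : Circle × Circle, f (z * w) = f z * f w) ∧
      Function.Injective f ∧
      Set.range f = {g | IsSymp g ∧ g * rot θ₁ θ₂ = rot θ₁ θ₂ * g}) := by
  have hrange := range_circleProdTorus_eq_centralizer h₁ h₂ h₃
  refine ⟨fun g => ?_, circleProdTorus, map_mul _, circleProdTorus_injective, hrange⟩
  rw [← mem_range_circleProdTorus_iff, hrange, Set.mem_ofPred_eq]
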